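/- Let n ≥ 3 be an integer and J_n = {0,…,n−2} ∪ {n+1,…,2n−1}. Let (m_k)_{k∈J_n} be positive integers such that at most n−1 of them equal 1, none of them equals 2, and at least one of them is greater than 2. Then there exist nonzero complex numbers z_k (k ∈ J_n), each a periodic point of minimal period m_k of the map f_0(w) = w^n, such that the (2n−2)×(2n−2) matrix with rows and columns indexed by J_n and with (k,i)-entry z_k^{−n^{m_k−1}}·P_{n,i,m_k}(z_k) is invertible. -/

import Mathlib

/-- The set of periodic points `z ∈ ℂ` of minimal period `m` of the map `f₀(w) = wⁿ`:
`f₀^∘m(z) = z` and `f₀^∘r(z) ≠ z` for all `1 ≤ r < m`. -/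
def perSet (n m : ℕ) : Set ℂ :=
  {z : ℂ | (fun w : ℂ => w ^ n)^[m] z = z ∧
    ∀ r, 1 ≤ r → r < m → (fun w : ℂ => w ^ n)^[r] z ≠ z}

/-- The polynomial `P_{n,j,m} ∈ ℂ[z]` from Proposition 4.3:
`P_{n,j,m}(z) = (j n^{m-1} - n^m)(z^{(j+1)n^{m-1}-1} + ∑_{i=0}^{m-2} z^{n^i(j-n)+n^{m-1}})`
for `0 ≤ j ≤ n-2` (where `n^i(j-n) + n^{m-1} = n^{m-1} - n^i (n-j)` is a nonnegative
integer), `P_{n,j,m}(z) = (j n^{m-1} - n^m) ∑_{i=0}^{m-1} z^{n^i(j-n)+n^{m-1}}` for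
`n+1 ≤ j ≤ 2n-2`, and
`P_{n,j,m}(z) = (j n^{m-1} - n^m)(z + ∑_{i=0}^{m-2} z^{n^i(n-1)+n^{m-1}})` for `j = 2n-1`. -/
noncomputable def P (n j m : ℕ) : Polynomial ℂ :=
  Polynomial.C ((j : ℂ) * (n : ℂ) ^ (m - 1) - (n : ℂ) ^ m) *
    (if j ≤ n - 2 then
      Polynomial.X ^ ((j + 1) * n ^ (m - 1) - 1) +
        ∑ i ∈ Finset.range (m - 1), Polynomial.X ^ (n ^ (m - 1) - n ^ i * (n - j))
    else if j ≤ 2 * n - 2 then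
      ∑ i ∈ Finset.range m, Polynomial.X ^ (n ^ i * (j - n) + n ^ (m - 1))
    else
      Polynomial.X +
        ∑ i ∈ Finset.range (m - 1), Polynomial.X ^ (n ^ i * (n - 1) + n ^ (m - 1)))

/-- The index set `J_n = {0,…,n-2} ∪ {n+1,…,2n-1}`. -/
def Jset (n : ℕ) : Finset ℕ :=
  (Finset.range (2 * n)).filter (fun k => k ≠ n - 1 ∧ k ≠ n)

/-!
At a nonzero point `z` of period `m`, each entry of the Jacobian row is a nonzero multiple of a
cycle sum `∑ i < m, z ^ (d * n ^ i)`, where the exponents `d` attached to the columns are distinct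
and satisfy `0 < |d| < n`. Choosing the rows greedily in order of increasing period, it is enough
that the rows available for period `1` span a space of dimension at least `n - 1`, and that those
available for a period `m ≥ 3` span the whole space. By duality, this is linear independence of
cycle sums as functions of `z`.

For `m = 1` these functions include `z, z ^ 2, …, z ^ (n - 1)` on the `(n - 1)`-st roots of unity.
For `m ≥ 3` the residues of all `d * n ^ i` modulo `n ^ m - 1` avoid a gap, hence have
representatives in a window of `(n - 1) * n ^ (m - 1) + 1` consecutive integers. There are at least
that many points of minimal period `m`, so a linear relation between the cycle sums, multiplied by
a power of `z`, is a polynomial with more roots than its degree. Since `d * n ^ i` is congruent to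
one of the exponents `d'` only if `d = d'` and `i = 0`, each coefficient of the relation is a
coefficient of this polynomial.
-/

section IndependentTransversal

variable {K E ι α : Type*} [DivisionRing K] [AddCommGroup E] [Module K E]

theorem exists_mem_notMem_span_image {V : Set E} {s : Finset ι}
    (h : s.card < Module.finrank K (Submodule.span K V)) (v : ι → E) :
    ∃ x ∈ V, x ∉ Submodule.span K (v '' s) := by
  classical
  by_contra! hV
  have hle : Submodule.span K V ≤ Submodule.span K (s.image v : Set E) := by
    rw [Submodule.span_le, Finset.coe_image]
    exact hV
  have hrank := (Submodule.finrank_mono hle).trans (finrank_span_finset_le_card (s.image v))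
  exact absurd (hrank.trans Finset.card_image_le) h.not_ge

theorem exists_linearIndepOn_of_card_le_finrank_span [LinearOrder α] (f : ι → α) {V : ι → Set E}
    (t : Finset ι)
    (h : ∀ k ∈ t, (t.filter (f · ≤ f k)).card ≤ Module.finrank K (Submodule.span K (V k))) :
    ∃ v : ι → E, (∀ k ∈ t, v k ∈ V k) ∧ LinearIndepOn K v t := by
  classical
  induction t using Finset.induction_on_max_value f with
  | empty => exact ⟨0, by simp, by simp⟩
  | insert a s has hmax ih =>
    obtain ⟨v, hvV, hv⟩ := ih fun k hk =>
      (Finset.card_le_card (Finset.filter_subset_filter _ (Finset.subset_insert a s))).trans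
        (h k (Finset.mem_insert_of_mem hk))
    have hcard : s.card < Module.finrank K (Submodule.span K (V a)) := by
      have ha := h a (Finset.mem_insert_self a s)
      rwa [Finset.filter_true_of_mem (by simpa using hmax), Finset.card_insert_of_notMem has] at ha
    obtain ⟨x, hxV, hx⟩ := exists_mem_notMem_span_image hcard v
    have hupd : Set.EqOn (Function.update v a x) v s := fun k hk =>
      Function.update_of_ne (by rintro rfl; exact has hk) x v
    refine ⟨Function.update v a x, ?_, ?_⟩
    · simp only [Finset.forall_mem_insert, Function.update_self]
      exact ⟨hxV, fun k hk => hupd hk ▸ hvV k hk⟩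
    · rw [Finset.coe_insert, linearIndepOn_insert (by simpa using has), linearIndepOn_congr hupd,
        hupd.image_eq, Function.update_self]
      exact ⟨hv, hx⟩

end IndependentTransversal

theorem card_le_finrank_span_image {K E X κ : Type*} [Field K] [AddCommGroup E] [Module K E]
    [FiniteDimensional K E] [Fintype κ] (φ : κ → Module.Dual K E) (R : X → E) (s : Set X)
    (h : LinearIndependent K fun t (x : s) => φ t (R x)) :
    Fintype.card κ ≤ Module.finrank K (Submodule.span K (R '' s)) := by
  let W := Submodule.span K (R '' s)
  let evalAt : Module.Dual K W →ₗ[K] s → K := LinearMap.pi fun x =>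
    Module.Dual.eval K W ⟨R x, Submodule.subset_span (Set.mem_image_of_mem R x.2)⟩
  have hW : LinearIndependent K fun t => (φ t).domRestrict W := .of_comp evalAt h
  rw [← Subspace.dual_finrank_eq]
  exact hW.fintype_card_le_finrank

theorem zpow_eq_zpow_of_modEq {G₀ : Type*} [GroupWithZero G₀] {z : G₀} (hz : z ≠ 0) {N a b : ℤ}
    (hN : z ^ N = 1) (h : a ≡ b [ZMOD N]) : z ^ a = z ^ b := by
  obtain ⟨k, hk⟩ := h.dvd
  rw [← sub_add_cancel b a, zpow_add₀ hz, hk, zpow_mul, hN, one_zpow, one_mul]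

section CycleSum

variable {K : Type*} [Field K]

theorem coeff_eq_zero_of_sum_zpow_eq_zero {ι : Type*} {s : Finset ι} {S : Finset K} (hS : 0 ∉ S)
    {a : ℤ} {e : ι → ℤ} (he : ∀ i ∈ s, e i ∈ Set.Ico a (a + S.card)) {c : ι → K}
    (h : ∀ z ∈ S, ∑ i ∈ s, c i * z ^ e i = 0) {i₀ : ι} (hi₀ : i₀ ∈ s)
    (hinj : ∀ i ∈ s, e i = e i₀ → i = i₀) : c i₀ = 0 := by
  let Q : Polynomial K := ∑ i ∈ s, Polynomial.monomial (e i - a).toNat (c i)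
  have hdeg : Q.degree < S.card := by
    refine (Polynomial.degree_sum_le _ _).trans_lt
      ((Finset.sup_lt_iff (WithBot.bot_lt_coe _)).mpr fun i hi => ?_)
    refine (Polynomial.degree_monomial_le _ _).trans_lt (Nat.cast_lt.mpr ?_)
    have := he i hi
    grind
  have heval : ∀ z ∈ S, Q.eval z = 0 := by
    intro z hz
    have hz0 : z ≠ 0 := ne_of_mem_of_not_mem hz hS
    calc Q.eval z = ∑ i ∈ s, z ^ (-a) * (c i * z ^ e i) := by
          simp only [Q, Polynomial.eval_finsetSum, Polynomial.eval_monomial]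
          refine Finset.sum_congr rfl fun i hi => ?_
          rw [← zpow_natCast, Int.toNat_of_nonneg (sub_nonneg.mpr (he i hi).1), sub_eq_neg_add,
            zpow_add₀ hz0]
          ring
      _ = 0 := by rw [← Finset.mul_sum, h z hz, mul_zero]
  have hQ : Q = 0 := Polynomial.eq_zero_of_degree_lt_of_eval_finset_eq_zero S hdeg heval
  have hcoeff : Q.coeff (e i₀ - a).toNat = c i₀ := by
    simp only [Q, Polynomial.finsetSum_coeff, Polynomial.coeff_monomial]
    rw [Finset.sum_eq_single_of_mem i₀ hi₀, if_pos rfl]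
    intro i hi hne
    refine if_neg fun heq => hne (hinj i hi ?_)
    have := he i hi
    have := he i₀ hi₀
    grind
  rw [← hcoeff, hQ, Polynomial.coeff_zero]

/-- The sum of `w ^ d` over the cycle `z, z ^ n, …, z ^ (n ^ (m - 1))` of a point `z` of period `m`
of `w ↦ w ^ n`. The exponent `d` may be negative. -/
def cycleSum (n m : ℕ) (d : ℤ) (z : K) : K :=
  ∑ i ∈ Finset.range m, z ^ (d * (n : ℤ) ^ i)

theorem cycleSum_mul_left {n m : ℕ} {z : K} (hz : z ≠ 0) (hzm : z ^ ((n : ℤ) ^ m - 1) = 1)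
    (d : ℤ) : cycleSum n m (d * n) z = cycleSum n m d z := by
  have hwrap : z ^ (d * (n : ℤ) ^ m) = z ^ (d * (n : ℤ) ^ 0) :=
    zpow_eq_zpow_of_modEq hz hzm (Int.modEq_iff_dvd.mpr ⟨-d, by ring⟩)
  have hshift := (Finset.sum_range_succ' (fun i => z ^ (d * (n : ℤ) ^ i)) m).symm.trans
    (Finset.sum_range_succ _ m)
  rw [hwrap] at hshift
  simpa only [cycleSum, mul_assoc, ← pow_succ'] using add_right_cancel hshift

theorem linearIndependent_cycleSum {κ : Type*} [Finite κ] {n m : ℕ} (hm : 0 < m) {S : Finset K}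
    (hS : ∀ z ∈ S, z ≠ 0 ∧ z ^ ((n : ℤ) ^ m - 1) = 1) {d : κ → ℤ} (a : ℤ)
    (hwindow : ∀ t, ∀ i < m,
      ∃ e ∈ Set.Ico a (a + S.card), e ≡ d t * (n : ℤ) ^ i [ZMOD (n : ℤ) ^ m - 1])
    (hinj : ∀ t t', ∀ i < m,
      d t' * (n : ℤ) ^ i ≡ d t [ZMOD (n : ℤ) ^ m - 1] → t' = t ∧ i = 0) :
    LinearIndependent K fun t (z : S) => cycleSum n m (d t) (z : K) := by
  have := Fintype.ofFinite κ
  choose! e he hmod using hwindow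
  rw [Fintype.linearIndependent_iff]
  intro c hc t
  let s : Finset (κ × ℕ) := Finset.univ ×ˢ Finset.range m
  have hs : ∀ p ∈ s, p.2 < m := by simp [s]
  have h0 : 0 ∉ S := fun h => (hS 0 h).1 rfl
  refine coeff_eq_zero_of_sum_zpow_eq_zero (s := s) (e := fun p => e p.1 p.2) (c := fun p => c p.1)
    (i₀ := (t, 0)) h0 (fun p hp => he p.1 p.2 (hs p hp)) ?_ (by simp [s, hm]) ?_
  · intro z hz
    calc ∑ p ∈ s, c p.1 * z ^ e p.1 p.2
        = ∑ p ∈ s, c p.1 * z ^ (d p.1 * (n : ℤ) ^ p.2) :=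
          Finset.sum_congr rfl fun p hp => by
            rw [zpow_eq_zpow_of_modEq (hS z hz).1 (hS z hz).2 (hmod p.1 p.2 (hs p hp))]
      _ = ∑ t, c t * cycleSum n m (d t) z := by
          simp only [s, Finset.sum_product, cycleSum, Finset.mul_sum]
      _ = 0 := by simpa using congrFun hc ⟨z, hz⟩
  · rintro ⟨t', i⟩ hp heq
    have hi : i < m := hs _ hp
    have hmod₀ : e t 0 ≡ d t [ZMOD (n : ℤ) ^ m - 1] := by simpa using hmod t 0 hm
    have hcong : d t' * (n : ℤ) ^ i ≡ d t [ZMOD (n : ℤ) ^ m - 1] :=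
      (hmod t' i hi).symm.trans ((congrArg (· ≡ d t [ZMOD (n : ℤ) ^ m - 1]) heq).mpr hmod₀)
    obtain ⟨rfl, rfl⟩ := hinj t t' i hi hcong
    rfl

end CycleSum

section PeriodicPoints

theorem mem_perSet_iff_minimalPeriod_eq {n m : ℕ} (hm : 0 < m) {z : ℂ} :
    z ∈ perSet n m ↔ Function.minimalPeriod (· ^ n) z = m := by
  constructor
  · rintro ⟨hper, hmin⟩
    have hper : Function.IsPeriodicPt (· ^ n) m z := hper
    refine (hper.minimalPeriod_le hm).antisymm (not_lt.mp fun hlt => ?_)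
    exact hmin _ (hper.minimalPeriod_pos hm) hlt (Function.iterate_minimalPeriod)
  · rintro rfl
    exact ⟨Function.iterate_minimalPeriod, fun r hr hlt =>
      Function.not_isPeriodicPt_of_pos_of_lt_minimalPeriod (Nat.one_le_iff_ne_zero.mp hr) hlt⟩

theorem isPeriodicPt_pow_iff {G₀ : Type*} [GroupWithZero G₀] {n m : ℕ} (hn : n ≠ 0) {z : G₀}
    (hz : z ≠ 0) : Function.IsPeriodicPt (· ^ n) m z ↔ z ^ (n ^ m - 1) = 1 := by
  rw [Function.IsPeriodicPt, Function.IsFixedPt, pow_iterate]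
  beta_reduce
  rw [← mul_pow_sub_one (pow_ne_zero m hn), mul_eq_left₀ hz]

theorem zpow_pow_sub_one_eq_one {n m : ℕ} (hn : n ≠ 0) {z : ℂ} (hz : z ∈ perSet n m \ {0}) :
    z ^ ((n : ℤ) ^ m - 1) = 1 := by
  have h := (isPeriodicPt_pow_iff hn hz.2).mp hz.1.1
  rwa [← zpow_natCast, Nat.cast_pred (by positivity), Nat.cast_pow] at h

theorem card_nthRootsFinset_one {N : ℕ} (hN : N ≠ 0) :
    (Polynomial.nthRootsFinset N (1 : ℂ)).card = N :=
  (Complex.isPrimitiveRoot_exp N hN).card_nthRootsFinset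

theorem card_biUnion_nthRootsFinset_lt {n k : ℕ} (hn : 2 ≤ n) (hk : k ≠ 0) :
    ((Finset.Icc 1 k).biUnion fun r => Polynomial.nthRootsFinset (n ^ r - 1) (1 : ℂ)).card + 1
      < n ^ (k + 1) := by
  have hpow : ∀ r ∈ Finset.Icc 1 k, 1 < n ^ r := fun r hr =>
    Nat.one_lt_pow (by grind) hn
  have hcard := Finset.card_biUnion_le (s := Finset.Icc 1 k)
    (t := fun r => Polynomial.nthRootsFinset (n ^ r - 1) (1 : ℂ))
  have hsum : ∑ r ∈ Finset.Icc 1 k, (Polynomial.nthRootsFinset (n ^ r - 1) (1 : ℂ)).card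
      < ∑ r ∈ Finset.Icc 1 k, n ^ r := by
    refine Finset.sum_lt_sum_of_nonempty (Finset.nonempty_Icc.mpr (by omega)) fun r hr => ?_
    have := hpow r hr
    rw [card_nthRootsFinset_one (by omega)]
    omega
  have := Nat.geomSum_lt (n := k + 1) (s := Finset.Icc 1 k) hn (by grind)
  omega

theorem exists_finset_subset_perSet_one {n : ℕ} (hn : 2 ≤ n) :
    ∃ S : Finset ℂ, (S : Set ℂ) ⊆ perSet n 1 \ {0} ∧ S.card = n - 1 := by
  refine ⟨Polynomial.nthRootsFinset (n - 1) 1, fun z hz => ?_, card_nthRootsFinset_one (by omega)⟩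
  have hz1 := (Polynomial.mem_nthRootsFinset (by omega) _).mp hz
  have hz0 : z ≠ 0 := Polynomial.ne_zero_of_mem_nthRootsFinset one_ne_zero hz
  refine ⟨⟨?_, by omega⟩, hz0⟩
  exact (isPeriodicPt_pow_iff (by omega) hz0).mpr (by rwa [pow_one])

-- A proper divisor of `m ≥ 3` is at most `m / 2 ≤ m - 2`.
theorem minimalPeriod_le_sub_two {α : Type*} {f : α → α} {x : α} {m : ℕ} (hm : 3 ≤ m)
    (hper : Function.IsPeriodicPt f m x) (hne : Function.minimalPeriod f x ≠ m) :
    Function.minimalPeriod f x ≤ m - 2 := by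
  obtain ⟨q, hq⟩ := hper.minimalPeriod_dvd
  have hq2 : 2 ≤ q := by
    by_contra! hlt
    interval_cases q <;> omega
  have : Function.minimalPeriod f x * 2 ≤ m := (Nat.mul_le_mul_left _ hq2).trans_eq hq.symm
  omega

theorem exists_finset_subset_perSet {n m : ℕ} (hn : 2 ≤ n) (hm : 3 ≤ m) :
    ∃ S : Finset ℂ, (S : Set ℂ) ⊆ perSet n m \ {0} ∧ (n - 1) * n ^ (m - 1) < S.card := by
  classical
  let roots (r : ℕ) : Finset ℂ := Polynomial.nthRootsFinset (n ^ r - 1) 1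
  have hpow : ∀ r, 1 ≤ r → 1 < n ^ r := fun r hr => Nat.one_lt_pow (by omega) hn
  have hroots {r : ℕ} (hr : 1 ≤ r) {z : ℂ} : z ∈ roots r ↔ z ^ (n ^ r - 1) = 1 := by
    have := hpow r hr
    exact Polynomial.mem_nthRootsFinset (by omega) _
  refine ⟨roots m \ (Finset.Icc 1 (m - 2)).biUnion roots, fun z hz => ?_, ?_⟩
  · obtain ⟨hzm, hzB⟩ := Finset.mem_sdiff.mp hz
    have hz0 : z ≠ 0 := Polynomial.ne_zero_of_mem_nthRootsFinset one_ne_zero hzm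
    have hper : Function.IsPeriodicPt (· ^ n) m z :=
      (isPeriodicPt_pow_iff (by omega) hz0).mpr ((hroots (by omega)).mp hzm)
    refine ⟨(mem_perSet_iff_minimalPeriod_eq (by omega)).mpr ?_, hz0⟩
    by_contra hne
    set r := Function.minimalPeriod (· ^ n) z
    have hrpos : 1 ≤ r := hper.minimalPeriod_pos (by omega)
    have hrle : r ≤ m - 2 := minimalPeriod_le_sub_two hm hper hne
    exact hzB (Finset.mem_biUnion.mpr ⟨r, Finset.mem_Icc.mpr ⟨hrpos, hrle⟩,
      (hroots hrpos).mpr ((isPeriodicPt_pow_iff (by omega) hz0).mp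
        (Function.isPeriodicPt_minimalPeriod _ z))⟩)
  · have hB : ((Finset.Icc 1 (m - 2)).biUnion roots).card + 1 < n ^ (m - 1) :=
      (card_biUnion_nthRootsFinset_lt hn (by omega)).trans_eq (by congr 1; omega)
    have hR : (roots m).card = n ^ m - 1 := card_nthRootsFinset_one (by have := hpow m; omega)
    have hsdiff := Finset.le_card_sdiff ((Finset.Icc 1 (m - 2)).biUnion roots) (roots m)
    have hsplit : n ^ m = (n - 1) * n ^ (m - 1) + n ^ (m - 1) := by
      rw [← Nat.succ_mul, Nat.succ_eq_add_one, Nat.sub_add_cancel (by omega),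
        mul_pow_sub_one (by omega)]
    omega

end PeriodicPoints

section Exponents

theorem eq_of_mul_pow_modEq_of_add_two_le {n d d' : ℤ} {m i : ℕ} (hn : 2 ≤ n)
    (hi : i + 2 ≤ m) (hm : 3 ≤ m) (hd : |d| < n) (hd' : |d'| < n) (hd'0 : d' ≠ 0)
    (h : d * n ^ i ≡ d' [ZMOD n ^ m - 1]) : d = d' ∧ i = 0 := by
  obtain ⟨k, rfl⟩ : ∃ k, m = k + 2 := ⟨m - 2, by omega⟩
  have hsmall : |d' - d * n ^ i| < n ^ (k + 2) - 1 := by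
    have hik : n ^ i ≤ n ^ k := pow_le_pow_right₀ (by omega) (by omega)
    have hk : n ≤ n ^ k := le_self_pow₀ (by omega) (by omega)
    calc |d' - d * n ^ i| ≤ |d'| + |d| * n ^ i := by
          simpa [abs_mul, abs_of_pos (show 0 < n ^ i by positivity)] using abs_sub d' (d * n ^ i)
      _ ≤ (n - 1) + (n - 1) * n ^ k := by
          gcongr <;> omega
      _ < n ^ (k + 2) - 1 := by
          have : 0 ≤ (n - 2) * (n * n ^ k) := mul_nonneg (by omega) (by positivity)
          rw [pow_add]
          nlinarith
  have heq : d' = d * n ^ i := sub_eq_zero.mp (Int.eq_zero_of_abs_lt_dvd h.dvd hsmall)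
  have hi0 : i = 0 := by
    by_contra hi0
    exact hd'0 (Int.eq_zero_of_abs_lt_dvd (heq ▸ (dvd_pow_self n hi0).mul_left d) hd')
  exact ⟨by simp [heq, hi0], hi0⟩

theorem eq_of_mul_pow_modEq {n d d' : ℤ} {m i : ℕ} (hn : 2 ≤ n) (hi : i < m) (hm : 3 ≤ m)
    (hd : |d| < n) (hd0 : d ≠ 0) (hd' : |d'| < n) (hd'0 : d' ≠ 0)
    (h : d * n ^ i ≡ d' [ZMOD n ^ m - 1]) : d = d' ∧ i = 0 := by
  rcases (show i + 2 ≤ m ∨ m = i + 1 by omega) with hi2 | rfl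
  · exact eq_of_mul_pow_modEq_of_add_two_le hn hi2 hm hd hd' hd'0 h
  -- Multiplication by `n` turns `n ^ (m - 1)` into `1`, exchanging the roles of `d` and `d'`.
  · have hmul : d' * n ^ 1 ≡ d [ZMOD n ^ (i + 1) - 1] :=
      calc d' * n ^ 1 ≡ d * n ^ i * n ^ 1 [ZMOD n ^ (i + 1) - 1] := h.symm.mul_right _
        _ ≡ d [ZMOD n ^ (i + 1) - 1] := Int.modEq_iff_dvd.mpr ⟨-d, by ring⟩
    have := (eq_of_mul_pow_modEq_of_add_two_le hn (by omega) hm hd' hd hd0 hmul).2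
    omega

theorem exists_modEq_mul_pow_mem_Icc {n d : ℤ} {m i : ℕ} (hn : 3 ≤ n) (hi : i < m)
    (hd : |d| < n) :
    ∃ e ∈ Set.Icc (-((n - 2) * n ^ (m - 1))) (n ^ (m - 1)), e ≡ d * n ^ i [ZMOD n ^ m - 1] := by
  obtain ⟨k, rfl⟩ : ∃ k, m = k + 1 := ⟨m - 1, by omega⟩
  simp only [Nat.add_sub_cancel, Set.mem_Icc, pow_succ n k]
  obtain ⟨hd₁, hd₂⟩ := abs_lt.mp hd
  have hk : 1 ≤ n ^ k := one_le_pow₀ (by omega)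
  rcases (show i < k ∨ i = k by omega) with hik | rfl
  · have hle : n ^ i * n ≤ n ^ k := (pow_succ n i).symm.trans_le (pow_le_pow_right₀ (by omega) hik)
    have hi0 : 0 < n ^ i := by positivity
    exact ⟨d * n ^ i, ⟨by nlinarith, by nlinarith⟩, rfl⟩
  rcases (show d = 1 - n ∨ (2 - n ≤ d ∧ d ≤ 1) ∨ 2 ≤ d by omega) with rfl | ⟨hd₃, hd₄⟩ | hd₃
  · exact ⟨n ^ i - 1, ⟨by nlinarith, by omega⟩, Int.modEq_iff_dvd.mpr ⟨-1, by ring⟩⟩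
  · exact ⟨d * n ^ i, ⟨by nlinarith, by nlinarith⟩, rfl⟩
  · exact ⟨d * n ^ i - (n ^ i * n - 1), ⟨by nlinarith, by nlinarith⟩,
      Int.modEq_iff_dvd.mpr ⟨1, by ring⟩⟩

end Exponents

section MultiplierGradient

theorem mem_Jset {n j : ℕ} : j ∈ Jset n ↔ j < 2 * n ∧ j ≠ n - 1 ∧ j ≠ n := by
  simp only [Jset, Finset.mem_filter, Finset.mem_range]

/-- The exponent `d` with `0 < |d| < n` such that the `j`-th derivative of the multiplier of a cycle
is a multiple of the sum of `w ^ d` over the cycle. It is `j - n`, except that for `j = 0` the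
exponent `-n` is replaced by `-1`, as `w ↦ w ^ n` permutes the cycle. -/
def cycleExponent (n j : ℕ) : ℤ :=
  if j = 0 then -1 else (j : ℤ) - n

theorem abs_cycleExponent_lt {n j : ℕ} (hn : 2 ≤ n) (hj : j ∈ Jset n) :
    |cycleExponent n j| < n := by
  grind [cycleExponent, mem_Jset]

theorem cycleExponent_ne_zero {n j : ℕ} (hj : j ∈ Jset n) : cycleExponent n j ≠ 0 := by
  grind [cycleExponent, mem_Jset]

theorem injOn_cycleExponent (n : ℕ) : Set.InjOn (cycleExponent n) (Jset n) := by
  intro j hj j' hj' h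
  rw [Finset.mem_coe] at hj hj'
  grind [cycleExponent, mem_Jset]

theorem cycleSum_cycleExponent {n m j : ℕ} {z : ℂ} (hz : z ≠ 0)
    (hzm : z ^ ((n : ℤ) ^ m - 1) = 1) :
    cycleSum n m (cycleExponent n j) z = cycleSum n m ((j : ℤ) - n) z := by
  rw [cycleExponent]
  split_ifs with hj
  · simpa [hj] using (cycleSum_mul_left hz hzm (-1)).symm
  · rfl

/-- The gradient with respect to `(a_i)_{i ∈ J_n}`, at the map `w ↦ w ^ n`, of the multiplier of the
cycle of a point `z` of period `m`: a row of the Jacobian matrix. -/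
noncomputable def multiplierGradient (n m : ℕ) (z : ℂ) : Jset n → ℂ :=
  fun i => z ^ (-((n : ℤ) ^ (m - 1))) * (P n i m).eval z

theorem zpow_neg_mul_eval_X_pow {z : ℂ} (hz : z ≠ 0) {N a b : ℤ} (hN : z ^ N = 1) {x : ℕ}
    (h : (x : ℤ) ≡ a + b [ZMOD N]) :
    z ^ (-a) * (Polynomial.X ^ x : Polynomial ℂ).eval z = z ^ b := by
  rw [Polynomial.eval_pow, Polynomial.eval_X, ← zpow_natCast, zpow_eq_zpow_of_modEq hz hN h,
    ← zpow_add₀ hz, neg_add_cancel_left]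

theorem zpow_neg_mul_eval_X_pow_add_sum {n k : ℕ} {z : ℂ} (hz : z ≠ 0)
    (hzm : z ^ ((n : ℤ) ^ (k + 1) - 1) = 1) {d : ℤ} {y : ℕ} {x : ℕ → ℕ}
    (hy : (y : ℤ) ≡ n ^ k + d * n ^ k [ZMOD n ^ (k + 1) - 1])
    (hx : ∀ i < k, (x i : ℤ) = n ^ k + d * n ^ i) :
    z ^ (-(n : ℤ) ^ k) * (Polynomial.X ^ y +
      ∑ i ∈ Finset.range k, Polynomial.X ^ x i : Polynomial ℂ).eval z = cycleSum n (k + 1) d z := by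
  rw [cycleSum, Finset.sum_range_succ_comm, Polynomial.eval_add, Polynomial.eval_finsetSum, mul_add,
    Finset.mul_sum, zpow_neg_mul_eval_X_pow hz hzm hy]
  congr 1
  refine Finset.sum_congr rfl fun i hi => zpow_neg_mul_eval_X_pow hz hzm ?_
  rw [hx i (Finset.mem_range.mp hi)]

theorem multiplierGradient_apply {n m : ℕ} (hm : 0 < m) {z : ℂ} (hz : z ≠ 0)
    (hzm : z ^ ((n : ℤ) ^ m - 1) = 1) (j : Jset n) :
    multiplierGradient n m z j = (n : ℂ) ^ (m - 1) * ((j : ℕ) - n) *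
      cycleSum n m (cycleExponent n j) z := by
  obtain ⟨j, hj⟩ := j
  obtain ⟨k, rfl⟩ : ∃ k, m = k + 1 := ⟨m - 1, by omega⟩
  have hj := mem_Jset.mp hj
  have hcoeff : (j : ℂ) * (n : ℂ) ^ k - (n : ℂ) ^ (k + 1) = (n : ℂ) ^ k * (j - n) := by ring
  simp only [multiplierGradient, P, cycleSum_cycleExponent hz hzm, Nat.add_sub_cancel,
    Polynomial.eval_mul, Polynomial.eval_C, hcoeff]
  rw [mul_left_comm]
  congr 1
  split_ifs with hj₁ hj₂
  · have hpos : 0 < (j + 1) * n ^ k := Nat.mul_pos j.succ_pos (Nat.pow_pos (by omega))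
    refine zpow_neg_mul_eval_X_pow_add_sum hz hzm (Int.modEq_iff_dvd.mpr ⟨-1, ?_⟩) fun i hi => ?_
    · push_cast [hpos]
      ring
    · have hle : n ^ i * (n - j) ≤ n ^ k :=
        calc n ^ i * (n - j) ≤ n ^ i * n := Nat.mul_le_mul_left _ (n.sub_le j)
          _ = n ^ (i + 1) := (pow_succ n i).symm
          _ ≤ n ^ k := Nat.pow_le_pow_right (by omega) hi
      push_cast [hle, show j ≤ n by omega]
      ring
  · have hx (i : ℕ) : ((n ^ i * (j - n) + n ^ k : ℕ) : ℤ) = n ^ k + (j - n) * n ^ i := by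
      push_cast [show n ≤ j by omega]
      ring
    rw [Finset.sum_range_succ_comm]
    exact zpow_neg_mul_eval_X_pow_add_sum (x := fun i => n ^ i * (j - n) + n ^ k) hz hzm
      (by rw [hx]) fun i _ => hx i
  · have hj_last : (j : ℤ) = 2 * n - 1 := by omega
    rw [← pow_one (Polynomial.X : Polynomial ℂ)]
    simp only [← pow_mul, one_mul]
    refine zpow_neg_mul_eval_X_pow_add_sum hz hzm (Int.modEq_iff_dvd.mpr ⟨1, ?_⟩) fun i _ => ?_
    · push_cast [hj_last]
      ring
    · push_cast [hj_last, show 1 ≤ n by omega]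
      ring

theorem card_le_finrank_span_multiplierGradient {κ : Type*} [Fintype κ] {n m : ℕ} (hn : n ≠ 0)
    (hm : 0 < m) {S : Set ℂ} (hS : S ⊆ perSet n m \ {0}) {j : κ → Jset n}
    (h : LinearIndependent ℂ fun t (z : S) => cycleSum n m (cycleExponent n (j t)) (z : ℂ)) :
    Fintype.card κ ≤ Module.finrank ℂ
      (Submodule.span ℂ (multiplierGradient n m '' (perSet n m \ {0}))) := by
  have hcoeff (t : κ) : (n : ℂ) ^ (m - 1) * ((j t : ℕ) - n) ≠ 0 :=
    mul_ne_zero (pow_ne_zero _ (Nat.cast_ne_zero.mpr hn))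
      (sub_ne_zero.mpr (Nat.cast_injective.ne (mem_Jset.mp (j t).2).2.2))
  have hcols : LinearIndependent ℂ fun t (z : S) =>
      (LinearMap.proj (j t) : Module.Dual ℂ (Jset n → ℂ)) (multiplierGradient n m z) := by
    convert h.units_smul fun t => Units.mk0 _ (hcoeff t) using 1
    ext t z
    have hz := hS z.2
    exact multiplierGradient_apply hm hz.2 (zpow_pow_sub_one_eq_one hn hz) (j t)
  exact (card_le_finrank_span_image _ _ S hcols).trans
    (Submodule.finrank_mono (Submodule.span_mono (Set.image_mono hS)))

theorem sub_one_le_finrank_span_multiplierGradient_one {n : ℕ} (hn : 2 ≤ n) :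
    n - 1 ≤ Module.finrank ℂ
      (Submodule.span ℂ (multiplierGradient n 1 '' (perSet n 1 \ {0}))) := by
  obtain ⟨S, hS, hcard⟩ := exists_finset_subset_perSet_one hn
  let j (t : Fin (n - 1)) : Jset n := ⟨n + 1 + t, mem_Jset.mpr (by omega)⟩
  have hexp (t : Fin (n - 1)) : cycleExponent n (j t) = t + 1 := by
    grind [cycleExponent]
  have hwindow (t : Fin (n - 1)) : ∀ i < 1, ∃ e ∈ Set.Ico (1 : ℤ) (1 + S.card),
      e ≡ cycleExponent n (j t) * (n : ℤ) ^ i [ZMOD (n : ℤ) ^ 1 - 1] := by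
    refine fun i hi => ⟨cycleExponent n (j t), ⟨by grind, by grind⟩, ?_⟩
    rw [Nat.lt_one_iff.mp hi, pow_zero, mul_one]
  have hinj (t t' : Fin (n - 1)) : ∀ i < 1,
      cycleExponent n (j t') * (n : ℤ) ^ i ≡ cycleExponent n (j t) [ZMOD (n : ℤ) ^ 1 - 1] →
        t' = t ∧ i = 0 := by
    intro i hi hmod
    obtain rfl := Nat.lt_one_iff.mp hi
    rw [hexp, hexp, pow_zero, mul_one, pow_one] at hmod
    have := Int.eq_zero_of_abs_lt_dvd hmod.dvd (by grind)
    exact ⟨by grind, rfl⟩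
  have hindep := linearIndependent_cycleSum one_pos
    (fun z hz => ⟨(hS hz).2, zpow_pow_sub_one_eq_one (by omega) (hS hz)⟩) 1 hwindow hinj
  simpa using card_le_finrank_span_multiplierGradient (by omega) one_pos hS hindep

theorem card_Jset_le_finrank_span_multiplierGradient {n m : ℕ} (hn : 3 ≤ n) (hm : 3 ≤ m) :
    (Jset n).card ≤ Module.finrank ℂ
      (Submodule.span ℂ (multiplierGradient n m '' (perSet n m \ {0}))) := by
  obtain ⟨S, hS, hcard⟩ := exists_finset_subset_perSet (n := n) (by omega) hm
  let a : ℤ := -((n - 2) * n ^ (m - 1))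
  have hwindow (j : Jset n) : ∀ i < m, ∃ e ∈ Set.Ico a (a + S.card),
      e ≡ cycleExponent n j * (n : ℤ) ^ i [ZMOD (n : ℤ) ^ m - 1] := by
    intro i hi
    obtain ⟨e, ⟨he₁, he₂⟩, hmod⟩ := exists_modEq_mul_pow_mem_Icc (n := n) (by omega) hi
      (abs_cycleExponent_lt (by omega) j.2)
    refine ⟨e, ⟨he₁, ?_⟩, hmod⟩
    zify [show 1 ≤ n by omega] at hcard
    linarith
  have hinj (j j' : Jset n) : ∀ i < m,
      cycleExponent n j' * (n : ℤ) ^ i ≡ cycleExponent n j [ZMOD (n : ℤ) ^ m - 1] →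
        j' = j ∧ i = 0 := by
    intro i hi hmod
    obtain ⟨hd, hi0⟩ := eq_of_mul_pow_modEq (by omega) hi hm
      (abs_cycleExponent_lt (by omega) j'.2) (cycleExponent_ne_zero j'.2)
      (abs_cycleExponent_lt (by omega) j.2) (cycleExponent_ne_zero j.2) hmod
    exact ⟨Subtype.ext (injOn_cycleExponent n j'.2 j.2 hd), hi0⟩
  have hindep := linearIndependent_cycleSum (by omega)
    (fun z hz => ⟨(hS hz).2, zpow_pow_sub_one_eq_one (by omega) (hS hz)⟩) a hwindow hinj
  simpa using card_le_finrank_span_multiplierGradient (by omega) (by omega) hS hindep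

end MultiplierGradient

/-- Proposition 7.1 (case of at most `n-1` fixed points): for `n ≥ 3` and periods
`(m_k)_{k ∈ J_n}` with at most `n-1` of them equal to `1`, none equal to `2`, and at
least one greater than `2`, there exist nonzero periodic points `z_k` of minimal
periods `m_k` making the `(2n-2)×(2n-2)` Jacobian matrix with `(k,i)`-entry
`z_k^{-n^{m_k-1}} P_{n,i,m_k}(z_k)` invertible. -/
theorem exists_independent_multipliers (n : ℕ) (hn : 3 ≤ n) (m : ℕ → ℕ)
    (hm1 : ∀ k ∈ Jset n, 1 ≤ m k)
    (hcard : ((Jset n).filter (fun k => m k = 1)).card ≤ n - 1)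
    (hne2 : ∀ k ∈ Jset n, m k ≠ 2)
    (hex : ∃ k ∈ Jset n, 2 < m k) :
    ∃ z : ℕ → ℂ,
      (∀ k ∈ Jset n, z k ≠ 0 ∧ z k ∈ perSet n (m k)) ∧
      (Matrix.of fun (k i : (Jset n : Finset ℕ)) =>
        z (k : ℕ) ^ (-((n : ℤ) ^ (m (k : ℕ) - 1))) *
          (P n (i : ℕ) (m (k : ℕ))).eval (z (k : ℕ))).det ≠ 0 := by
  obtain ⟨v, hvV, hv⟩ := exists_linearIndepOn_of_card_le_finrank_span (K := ℂ) m
    (V := fun k => multiplierGradient n (m k) '' (perSet n (m k) \ {0})) (Jset n) fun k hk => by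
      rcases (show m k = 1 ∨ 3 ≤ m k by grind) with h1 | h3
      · rw [h1]
        refine le_trans ?_ (sub_one_le_finrank_span_multiplierGradient_one (by omega))
        rwa [Finset.filter_congr fun l hl => (show m l ≤ 1 ↔ m l = 1 by grind)]
      · exact (Finset.card_filter_le _ _).trans
          (card_Jset_le_finrank_span_multiplierGradient hn h3)
  choose! z hz hzv using hvV
  refine ⟨z, fun k hk => ⟨(hz k hk).2, (hz k hk).1⟩, ?_⟩
  have hrows : LinearIndependent ℂ fun k : Jset n => multiplierGradient n (m k) (z k) := by
    have hrow (k : Jset n) : multiplierGradient n (m k) (z k) = v k := hzv k k.2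
    simp only [hrow]
    exact hv
  exact ((Matrix.isUnit_iff_isUnit_det _).mp
    (Matrix.linearIndependent_rows_iff_isUnit.mp hrows)).ne_zero
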